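/- Let h : ℝ^n → [0,∞) be a proper log-concave function in John s-position and suppose Λ = {x ∈ B^n : h(x)^{1/s} = √(1−|x|₂²)} is a finite set {x₁,…,x_m}. Let F ∈ 𝒲 be of class C¹ and define Ī_c(M⊕β,w) = Σ_{i=1}^m h(x_i)^{1/s} F(⟨x_i,Mx_i+w⟩/h(x_i)^{2/s} + β). If the restriction of Ī_c to the subspace {(M⊕β,w) : M symmetric n×n, β ∈ ℝ, w ∈ ℝ^n, s·β + tr M = 0} is coercive, then for any global minimum (M₀⊕β₀,w₀) of this restriction, the numbers c_i = h(x_i)^{−1/s} F′(⟨x_i,M₀x_i+w₀⟩/h(x_i)^{2/s} + β₀) are non-negative and not all zero, and there exists λ > 0 such that: h(x_i)^{1/s} = √(1−|x_i|₂²) for all i; Σ_{i=1}^m (c_i/λ) x_i x_iᵀ = Id_n; Σ_{i=1}^m (c_i/λ) h(x_i)^{2/s} = s; and Σ_{i=1}^m (c_i/λ) x_i = 0. -/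

import Mathlib

/-!
The function `Ī_c` is differentiable, so at a minimum on the linear subspace
`s β + tr M = 0` its directional derivative vanishes in every direction of that subspace:
`∑ c_i (⟨x_i, M x_i + w⟩ + h(x_i)^{2/s} β) = 0` (`stationarity`). The directions `w = e_j`,
`(E_jj, -1/s)` and `E_jk + E_kj` give the three moment identities with
`λ = (∑ c_i h(x_i)^{2/s}) / s`, and `λ > 0` as soon as the nonnegative numbers `c_i` are not all
zero.

They are not all zero because of coercivity (`exists_cNum_ne_zero`). As `F'` is non-decreasing and
`F'(0) > 0`, vanishing of all `c_i` would force every argument of `F` at the minimum to be negative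
wherever `h(x_i) > 0`. Scaling the minimizer by `t ≥ 1` would then only decrease these arguments,
and `F` is non-decreasing, so `Ī_c` would be bounded along a ray.

Contact points with `h(x_i) = 0` are harmless: there `0 ^ (1 / s) = 0` kills the term of `Ī_c`, and
`0 ^ (-(1 / s)) = 0` makes `c_i = 0`.
-/

open MeasureTheory Real Set Filter Topology

noncomputable section

/-- squared Euclidean norm on ℝ^n -/
def en2 {n : ℕ} (x : Fin n → ℝ) : ℝ := ∑ i, x i ^ 2

/-- Euclidean inner product on ℝ^n -/
def dotp {n : ℕ} (x y : Fin n → ℝ) : ℝ := ∑ i, x i * y i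

/-- the closed Euclidean unit ball B^n -/
def unitBall (n : ℕ) : Set (Fin n → ℝ) := {x | en2 x ≤ 1}

/-- log-concavity -/
def LogConcave {n : ℕ} (h : (Fin n → ℝ) → ℝ) : Prop :=
  ∀ x y : Fin n → ℝ, ∀ l : ℝ, 0 < l → l < 1 →
    h x ^ l * h y ^ (1 - l) ≤ h (l • x + (1 - l) • y)

/-- proper log-concave: upper semicontinuous, log-concave, finite positive integral -/
def ProperLogConcave {n : ℕ} (h : (Fin n → ℝ) → ℝ) : Prop :=
  (∀ x, 0 ≤ h x) ∧ UpperSemicontinuous h ∧ LogConcave h ∧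
    MeasureTheory.Integrable h ∧ 0 < ∫ x, h x

/-- the s-lifting of h -/
def sLift {n : ℕ} (s : ℝ) (h : (Fin n → ℝ) → ℝ) : Set ((Fin n → ℝ) × ℝ) :=
  {p | |p.2| ≤ h p.1 ^ (1 / s)}

/-- the n-symmetric ellipsoid (A⊕α)B^{n+1} + (a,0), as a subset of ℝ^n × ℝ -/
def ellImage {n : ℕ} (A : Matrix (Fin n) (Fin n) ℝ) (α : ℝ) (a : Fin n → ℝ) :
    Set ((Fin n → ℝ) × ℝ) :=
  {p | ∃ x : Fin n → ℝ, ∃ t : ℝ, en2 x + t ^ 2 ≤ 1 ∧ p = (A.mulVec x + a, α * t)}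

/-- h is in John s-position -/
def JohnSPos {n : ℕ} (s : ℝ) (h : (Fin n → ℝ) → ℝ) : Prop :=
  (∀ x : Fin n → ℝ, x ∈ unitBall n → Real.sqrt (1 - en2 x) ≤ h x ^ (1 / s)) ∧
  (∀ (A : Matrix (Fin n) (Fin n) ℝ) (α : ℝ) (a : Fin n → ℝ),
    A.PosDef → 0 < α → ellImage A α a ⊆ sLift s h → α ^ s * A.det ≤ 1)

/-- the contact set Λ = {x ∈ Bⁿ : h(x)^{1/s} = √(1-|x|²)} -/
def contactSet {n : ℕ} (s : ℝ) (h : (Fin n → ℝ) → ℝ) : Set (Fin n → ℝ) :=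
  {x | en2 x ≤ 1 ∧ h x ^ (1 / s) = Real.sqrt (1 - en2 x)}

/-- the class 𝒲 of weight functions -/
def ClassW (F : ℝ → ℝ) : Prop :=
  (∀ x, 0 ≤ F x) ∧ Monotone F ∧ ConvexOn ℝ Set.univ F ∧
    StrictConvexOn ℝ (Set.Ici (0 : ℝ)) F ∧ 0 < deriv F 0

/-- the norm ‖(M⊕β,w)‖ = √(‖M⊕β‖_F² + |w|₂²) -/
def tripNorm {n : ℕ} (M : Matrix (Fin n) (Fin n) ℝ) (β : ℝ) (w : Fin n → ℝ) : ℝ :=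
  Real.sqrt ((∑ i, ∑ j, M i j ^ 2) + β ^ 2 + ∑ i, w i ^ 2)

/-- properties (f1)-(f4) -/
def Prop_f (f : ℝ → ℝ) : Prop :=
  (∀ x, 0 ≤ f x) ∧ LocallyLipschitz f ∧ ConvexOn ℝ Set.univ f ∧
    (∀ x ≤ (-1 : ℝ), f x = 0) ∧ StrictMonoOn f (Set.Ici (-1 : ℝ))

/-- properties (g1)-(g5) -/
def Prop_g (g : ℝ → ℝ) : Prop :=
  (∀ x, 0 ≤ g x) ∧ LocallyLipschitz g ∧ Antitone g ∧
    (∀ x ≤ (-1 : ℝ), g x = 1) ∧ (∀ x : ℝ, -1 < x → x < 1 → 0 < g x) ∧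
    (∀ x : ℝ, (1 : ℝ) ≤ x → g x = 0)

/-- the functional L̄_r -/
def Lbar {n : ℕ} (s : ℝ) (h : (Fin n → ℝ) → ℝ) (f g : ℝ → ℝ) (r : ℝ)
    (A : Matrix (Fin n) (Fin n) ℝ) (α : ℝ) (v : Fin n → ℝ) : ℝ :=
  (1 / (1 - r)) *
    ∫ x : Fin n → ℝ, ∫ y in Set.Ioi (0 : ℝ),
      (if h (A.mulVec x + v) = 0 ∨ h x = 0 then 0 else
        f ((α * y / h (A.mulVec x + v) ^ (1 / s) - 1) / (1 - r)) *
        g (((en2 x + y ^ 2 - 1) / (2 * h x ^ (2 / s)) + 1 - 1) / (1 - r)))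

/-- the functional Ī_ν -/
def IbarNu {n : ℕ} (s : ℝ) (h : (Fin n → ℝ) → ℝ)
    (ν : MeasureTheory.Measure (Fin n → ℝ)) (F : ℝ → ℝ)
    (M : Matrix (Fin n) (Fin n) ℝ) (β : ℝ) (w : Fin n → ℝ) : ℝ :=
  ∫ x in unitBall n,
    (if h x = 0 then 0 else
      h x ^ (1 / s) * F (dotp x (M.mulVec x + w) / h x ^ (2 / s) + β)) ∂ν

/-- the functional Ī_1 -/
def Ibar1 {n : ℕ} (s : ℝ) (h : (Fin n → ℝ) → ℝ) (F : ℝ → ℝ)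
    (M : Matrix (Fin n) (Fin n) ℝ) (β : ℝ) (w : Fin n → ℝ) : ℝ :=
  ∫ x in contactSet s h,
    h x ^ (1 / s) * F (dotp x (M.mulVec x + w) / h x ^ (2 / s) + β)

/-- the functional Ī_r -/
def IbarR {n : ℕ} (s : ℝ) (h : (Fin n → ℝ) → ℝ) (f g : ℝ → ℝ) (r : ℝ)
    (M : Matrix (Fin n) (Fin n) ℝ) (β : ℝ) (w : Fin n → ℝ) : ℝ :=
  (1 + (1 - r) * β) ^ (s - 1) / (1 - r) *
    ∫ x : Fin n → ℝ, ∫ y in Set.Ioi (0 : ℝ),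
      (if h x = 0 ∨ h ((1 + (1 - r) • M)⁻¹.mulVec (x - (1 - r) • w)) = 0 then 0 else
        f ((y / h x ^ (1 / s) - 1) / (1 - r)) *
        g (((en2 ((1 + (1 - r) • M)⁻¹.mulVec (x - (1 - r) • w)) +
              ((1 + (1 - r) * β)⁻¹ * y) ^ 2 - 1) /
            (2 * h ((1 + (1 - r) • M)⁻¹.mulVec (x - (1 - r) • w)) ^ (2 / s)) + 1 - 1) /
          (1 - r)))

/-- the convolution F = f ∗ ḡ, F(x) = ∫ f(t) g(t-x) dt -/
def Fconv (f g : ℝ → ℝ) : ℝ → ℝ := fun x => ∫ t : ℝ, f t * g (t - x)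

/-- the functional Ī_c (counting measure on the finite contact set) -/
def IbarC {n m : ℕ} (s : ℝ) (h : (Fin n → ℝ) → ℝ) (F : ℝ → ℝ)
    (x : Fin m → Fin n → ℝ)
    (M : Matrix (Fin n) (Fin n) ℝ) (β : ℝ) (w : Fin n → ℝ) : ℝ :=
  ∑ i, h (x i) ^ (1 / s) * F (dotp (x i) (M.mulVec (x i) + w) / h (x i) ^ (2 / s) + β)

/-- the numbers c_i -/
def cNum {n m : ℕ} (s : ℝ) (h : (Fin n → ℝ) → ℝ) (F : ℝ → ℝ)
    (x : Fin m → Fin n → ℝ)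
    (M₀ : Matrix (Fin n) (Fin n) ℝ) (β₀ : ℝ) (w₀ : Fin n → ℝ) (i : Fin m) : ℝ :=
  h (x i) ^ (-(1 / s)) *
    deriv F (dotp (x i) (M₀.mulVec (x i) + w₀) / h (x i) ^ (2 / s) + β₀)

lemma dotp_add_smul {n : ℕ} (x : Fin n → ℝ) (M₀ M : Matrix (Fin n) (Fin n) ℝ)
    (w₀ w : Fin n → ℝ) (t : ℝ) :
    dotp x ((M₀ + t • M).mulVec x + (w₀ + t • w)) =
      dotp x (M₀.mulVec x + w₀) + t * dotp x (M.mulVec x + w) := by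
  simp only [dotp, Finset.mul_sum, ← Finset.sum_add_distrib]
  refine Finset.sum_congr rfl fun i _ => ?_
  simp only [Matrix.add_mulVec, Matrix.smul_mulVec, Pi.add_apply, Pi.smul_apply, smul_eq_mul]
  ring

lemma dotp_smul {n : ℕ} (x : Fin n → ℝ) (M : Matrix (Fin n) (Fin n) ℝ)
    (w : Fin n → ℝ) (t : ℝ) :
    dotp x ((t • M).mulVec x + t • w) = t * dotp x (M.mulVec x + w) := by
  have := dotp_add_smul x 0 M 0 w t
  simpa [dotp] using this

lemma tripNorm_smul {n : ℕ} (M : Matrix (Fin n) (Fin n) ℝ) (β : ℝ) (w : Fin n → ℝ)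
    {t : ℝ} (ht : 0 ≤ t) :
    tripNorm (t • M) (t * β) (t • w) = t * tripNorm M β w := by
  unfold tripNorm
  have : (∑ i, ∑ j, (t • M) i j ^ 2) + (t * β) ^ 2 + ∑ i, (t • w) i ^ 2
      = t ^ 2 * ((∑ i, ∑ j, M i j ^ 2) + β ^ 2 + ∑ i, w i ^ 2) := by
    simp only [Matrix.smul_apply, Pi.smul_apply, smul_eq_mul, mul_pow, ← Finset.mul_sum]
    ring
  rw [this, Real.sqrt_mul (sq_nonneg t), Real.sqrt_sq ht]

lemma eq_zero_of_tripNorm {n : ℕ} {M : Matrix (Fin n) (Fin n) ℝ} {β : ℝ} {w : Fin n → ℝ}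
    (h0 : tripNorm M β w = 0) : M = 0 ∧ β = 0 ∧ w = 0 := by
  have hM : ∀ i, 0 ≤ ∑ j, M i j ^ 2 := fun i => Finset.sum_nonneg fun j _ => sq_nonneg _
  have hM' : 0 ≤ ∑ i, ∑ j, M i j ^ 2 := Finset.sum_nonneg fun i _ => hM i
  have hw : 0 ≤ ∑ i, w i ^ 2 := Finset.sum_nonneg fun i _ => sq_nonneg _
  have hβ := sq_nonneg β
  rw [tripNorm, Real.sqrt_eq_zero (by positivity)] at h0
  have h1 : ∑ i, ∑ j, M i j ^ 2 = 0 := by linarith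
  have h2 : ∑ i, w i ^ 2 = 0 := by linarith
  have h3 : β ^ 2 = 0 := by linarith
  refine ⟨?_, pow_eq_zero_iff (two_ne_zero) |>.1 h3, ?_⟩
  · ext i j
    rw [Finset.sum_eq_zero_iff_of_nonneg fun i _ => hM i] at h1
    have := h1 i (Finset.mem_univ _)
    rw [Finset.sum_eq_zero_iff_of_nonneg fun j _ => sq_nonneg _] at this
    simpa using this j (Finset.mem_univ _)
  · ext i
    rw [Finset.sum_eq_zero_iff_of_nonneg fun j _ => sq_nonneg _] at h2
    simpa using h2 i (Finset.mem_univ _)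

lemma rpow_two_div {a s : ℝ} (ha : 0 ≤ a) : a ^ (2 / s) = (a ^ (1 / s)) ^ 2 := by
  rw [← Real.rpow_natCast, ← Real.rpow_mul ha]
  congr 1
  push_cast
  ring

/-- First-order condition: if the restriction of `Ī_c` to the subspace `s β + tr M = 0` is minimal
at `(M₀ ⊕ β₀, w₀)`, its derivative vanishes in every direction of that subspace. -/
lemma stationarity {n m : ℕ} {s : ℝ} (hs : 0 < s)
    {h : (Fin n → ℝ) → ℝ} (hh : ∀ x, 0 ≤ h x) {x : Fin m → Fin n → ℝ}
    {F : ℝ → ℝ} (hF1 : Differentiable ℝ F)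
    {M₀ : Matrix (Fin n) (Fin n) ℝ} {β₀ : ℝ} {w₀ : Fin n → ℝ}
    (hM₀ : M₀.IsSymm) (htr₀ : s * β₀ + Matrix.trace M₀ = 0)
    (hmin : ∀ (M : Matrix (Fin n) (Fin n) ℝ) (β : ℝ) (w : Fin n → ℝ),
      M.IsSymm → s * β + Matrix.trace M = 0 →
      IbarC s h F x M₀ β₀ w₀ ≤ IbarC s h F x M β w)
    (M : Matrix (Fin n) (Fin n) ℝ) (β : ℝ) (w : Fin n → ℝ)
    (hM : M.IsSymm) (htr : s * β + Matrix.trace M = 0) :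
    ∑ i, cNum s h F x M₀ β₀ w₀ i *
      (dotp (x i) (M.mulVec (x i) + w) + h (x i) ^ (2 / s) * β) = 0 := by
  set φ : ℝ → ℝ := fun t => IbarC s h F x (M₀ + t • M) (β₀ + t * β) (w₀ + t • w) with hφ
  have hloc : IsLocalMin φ 0 := by
    refine Filter.Eventually.of_forall fun t => ?_
    have := hmin (M₀ + t • M) (β₀ + t * β) (w₀ + t • w) (hM₀.add (hM.smul t)) (by
      rw [Matrix.trace_add, Matrix.trace_smul, smul_eq_mul]
      linear_combination htr₀ + t * htr)
    simpa [hφ] using this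
  have hder : HasDerivAt φ (∑ i, cNum s h F x M₀ β₀ w₀ i *
      (dotp (x i) (M.mulVec (x i) + w) + h (x i) ^ (2 / s) * β)) 0 := by
    simp only [hφ, IbarC, dotp_add_smul]
    refine HasDerivAt.fun_sum fun i _ => ?_
    set y := h (x i)
    set a := dotp (x i) (M₀.mulVec (x i) + w₀)
    set b := dotp (x i) (M.mulVec (x i) + w)
    have hlin : HasDerivAt (fun t : ℝ => (a + t * b) / y ^ (2 / s) + (β₀ + t * β))
        (b / y ^ (2 / s) + β) 0 := by
      have h1 : HasDerivAt (fun t : ℝ => a + t * b) b 0 := by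
        simpa using ((hasDerivAt_id (0 : ℝ)).mul_const b).const_add a
      have h2 : HasDerivAt (fun t : ℝ => β₀ + t * β) β 0 := by
        simpa using ((hasDerivAt_id (0 : ℝ)).mul_const β).const_add β₀
      exact (h1.div_const _).add h2
    have hF0 : HasDerivAt F (deriv F (a / y ^ (2 / s) + β₀))
        ((fun t : ℝ => (a + t * b) / y ^ (2 / s) + (β₀ + t * β)) 0) := by
      simpa using (hF1 (a / y ^ (2 / s) + β₀)).hasDerivAt
    have hcomp := (hF0.comp (0 : ℝ) hlin).const_mul (y ^ (1 / s))
    refine hcomp.congr_deriv ?_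
    have hy : 0 ≤ y := hh _
    simp only [cNum]
    change _ = y ^ (-(1 / s)) * deriv F (a / y ^ (2 / s) + β₀) * (b + y ^ (2 / s) * β)
    rcases hy.eq_or_lt with h0 | h0
    · have hs' : 1 / s ≠ 0 := by positivity
      rw [← h0, Real.zero_rpow hs', Real.zero_rpow (neg_ne_zero.2 hs')]
      ring
    · have hp : 0 < y ^ (1 / s) := Real.rpow_pos_of_pos h0 _
      rw [rpow_two_div hy, Real.rpow_neg hy]
      generalize deriv F _ = d
      field_simp
  exact hloc.hasDerivAt_eq_zero hder

/-- Coercivity excludes that all `c_i` vanish: otherwise `Ī_c` would be bounded on a ray. -/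
lemma exists_cNum_ne_zero {n m : ℕ} (hn : 1 ≤ n) {s : ℝ} (hs : 0 < s)
    {h : (Fin n → ℝ) → ℝ} (hh : ∀ x, 0 ≤ h x) {x : Fin m → Fin n → ℝ}
    {F : ℝ → ℝ} (hmono : Monotone F) (hd : Monotone (deriv F)) (hd0 : 0 < deriv F 0)
    (hcoer : ∀ C : ℝ, ∃ R : ℝ, ∀ (M : Matrix (Fin n) (Fin n) ℝ) (β : ℝ) (w : Fin n → ℝ),
      M.IsSymm → s * β + Matrix.trace M = 0 → R ≤ tripNorm M β w →
      C ≤ IbarC s h F x M β w)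
    {M₀ : Matrix (Fin n) (Fin n) ℝ} {β₀ : ℝ} {w₀ : Fin n → ℝ}
    (hM₀ : M₀.IsSymm) (htr₀ : s * β₀ + Matrix.trace M₀ = 0) :
    ∃ i, cNum s h F x M₀ β₀ w₀ i ≠ 0 := by
  by_contra! hc
  have hs' : 1 / s ≠ 0 := by positivity
  have hneg : ∀ i, 0 < h (x i) →
      dotp (x i) (M₀.mulVec (x i) + w₀) / h (x i) ^ (2 / s) + β₀ < 0 := by
    intro i hi
    by_contra! hge
    have h1 := hd hge
    have h2 : 0 < h (x i) ^ (-(1 / s)) := Real.rpow_pos_of_pos hi _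
    have h3 : 0 < cNum s h F x M₀ β₀ w₀ i := mul_pos h2 (by linarith)
    exact h3.ne' (hc i)
  -- a ray in the subspace on which `Ī_c` is bounded above
  obtain ⟨M, β, w, hM, htr, hpos, K, hK⟩ : ∃ (M : Matrix (Fin n) (Fin n) ℝ) (β : ℝ)
      (w : Fin n → ℝ), M.IsSymm ∧ s * β + Matrix.trace M = 0 ∧ 0 < tripNorm M β w ∧
      ∃ K, ∀ t : ℝ, 1 ≤ t → IbarC s h F x (t • M) (t * β) (t • w) ≤ K := by
    by_cases hex : ∃ i, 0 < h (x i)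
    · obtain ⟨i₀, hi₀⟩ := hex
      refine ⟨M₀, β₀, w₀, hM₀, htr₀, ?_, IbarC s h F x M₀ β₀ w₀, fun t ht => ?_⟩
      · refine lt_of_le_of_ne (Real.sqrt_nonneg _) fun h0 => ?_
        obtain ⟨rfl, rfl, rfl⟩ := eq_zero_of_tripNorm h0.symm
        simpa [dotp] using hneg i₀ hi₀
      · refine Finset.sum_le_sum fun i _ => ?_
        rcases (hh (x i)).eq_or_lt with h0 | h0
        · simp [← h0, Real.zero_rpow (inv_ne_zero hs.ne')]
        · refine mul_le_mul_of_nonneg_left (hmono ?_) (Real.rpow_nonneg h0.le _)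
          have := hneg i h0
          rw [dotp_smul, mul_div_assoc, ← mul_add]
          nlinarith
    · refine ⟨0, 0, fun _ => 1, Matrix.isSymm_zero, by simp, ?_, 0, fun t _ => ?_⟩
      · refine lt_of_le_of_ne (Real.sqrt_nonneg _) fun h0 => ?_
        have := congrFun (eq_zero_of_tripNorm h0.symm).2.2 ⟨0, hn⟩
        simp at this
      · refine (Finset.sum_eq_zero fun i _ => ?_).le
        have h0 : h (x i) = 0 := by
          push Not at hex
          exact le_antisymm (hex i) (hh _)
        rw [h0, Real.zero_rpow hs', zero_mul]
  obtain ⟨R, hR⟩ := hcoer (K + 1)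
  set t := max 1 (R / tripNorm M β w)
  have ht : 1 ≤ t := le_max_left _ _
  have h1 := hR (t • M) (t * β) (t • w) (hM.smul t) (by
    rw [Matrix.trace_smul, smul_eq_mul]
    linear_combination t * htr) (by
    rw [tripNorm_smul _ _ _ (by linarith)]
    exact (div_le_iff₀ hpos).1 (le_max_right _ _))
  linarith [hK t ht]

theorem stmt1 {n m : ℕ} (hn : 1 ≤ n) (s : ℝ) (hs : 0 < s)
    (h : (Fin n → ℝ) → ℝ) (hP : ProperLogConcave h) (hJ : JohnSPos s h)
    (x : Fin m → Fin n → ℝ) (hinj : Function.Injective x)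
    (hΛ : contactSet s h = Set.range x)
    (F : ℝ → ℝ) (hF : ClassW F) (hF1 : ContDiff ℝ 1 F)
    (hcoer : ∀ C : ℝ, ∃ R : ℝ, ∀ (M : Matrix (Fin n) (Fin n) ℝ) (β : ℝ) (w : Fin n → ℝ),
      M.IsSymm → s * β + Matrix.trace M = 0 → R ≤ tripNorm M β w →
      C ≤ IbarC s h F x M β w)
    (M₀ : Matrix (Fin n) (Fin n) ℝ) (β₀ : ℝ) (w₀ : Fin n → ℝ)
    (hM₀ : M₀.IsSymm) (htr₀ : s * β₀ + Matrix.trace M₀ = 0)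
    (hmin : ∀ (M : Matrix (Fin n) (Fin n) ℝ) (β : ℝ) (w : Fin n → ℝ),
      M.IsSymm → s * β + Matrix.trace M = 0 →
      IbarC s h F x M₀ β₀ w₀ ≤ IbarC s h F x M β w) :
    (∀ i, 0 ≤ cNum s h F x M₀ β₀ w₀ i) ∧
    (∃ i, cNum s h F x M₀ β₀ w₀ i ≠ 0) ∧
    (∃ lam : ℝ, 0 < lam ∧
      (∀ i, h (x i) ^ (1 / s) = Real.sqrt (1 - en2 (x i))) ∧
      (∀ j k, ∑ i, (cNum s h F x M₀ β₀ w₀ i / lam) * (x i j * x i k)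
        = if j = k then 1 else 0) ∧
      (∑ i, (cNum s h F x M₀ β₀ w₀ i / lam) * h (x i) ^ (2 / s) = s) ∧
      (∀ j, ∑ i, (cNum s h F x M₀ β₀ w₀ i / lam) * x i j = 0)) := by
  have hh := hP.1
  obtain ⟨-, hmono, hconv, -, hd0⟩ := hF
  have hdiff : Differentiable ℝ F := hF1.differentiable one_ne_zero
  have hd : Monotone (deriv F) := fun a b hab =>
    hconv.monotoneOn_deriv (fun z _ => hdiff z) (mem_univ a) (mem_univ b) hab
  have hnn : ∀ i, 0 ≤ cNum s h F x M₀ β₀ w₀ i := fun i =>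
    mul_nonneg (Real.rpow_nonneg (hh _) _) hmono.deriv_nonneg
  have hne := exists_cNum_ne_zero (w₀ := w₀) hn hs hh (x := x) hmono hd hd0 hcoer hM₀ htr₀
  have hst := stationarity hs hh hdiff hM₀ htr₀ hmin
  set c := cNum s h F x M₀ β₀ w₀ with hcdef
  have hT : 0 < ∑ i, c i * h (x i) ^ (2 / s) := by
    obtain ⟨i, hi⟩ := hne
    have hp : 0 < h (x i) := by
      refine lt_of_le_of_ne (hh _) fun h0 => hi ?_
      have hs' : -(1 / s) ≠ 0 := neg_ne_zero.2 (by positivity)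
      rw [hcdef, cNum, ← h0, Real.zero_rpow hs', zero_mul]
    exact Finset.sum_pos' (fun j _ => mul_nonneg (hnn j) (Real.rpow_nonneg (hh _) _))
      ⟨i, Finset.mem_univ _,
        mul_pos (lt_of_le_of_ne (hnn i) (Ne.symm hi)) (Real.rpow_pos_of_pos hp _)⟩
  set T := ∑ i, c i * h (x i) ^ (2 / s) with hTdef
  have hmove : ∀ (lam : ℝ) (g : Fin m → ℝ),
      ∑ i, c i / lam * g i = (∑ i, c i * g i) / lam := by
    intro lam g
    rw [Finset.sum_div]
    exact Finset.sum_congr rfl fun i _ => by ring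
  have hbil : ∀ (j k : Fin n) (v : Fin n → ℝ) (a : ℝ),
      dotp v ((Matrix.single j k a).mulVec v) = a * (v j * v k) := by
    intro j k v a
    simp only [dotp, Matrix.single_mulVec, Function.update_apply, Pi.zero_apply,
      mul_ite, mul_zero, Finset.sum_ite_eq', Finset.mem_univ, if_true]
    ring
  have hadd : ∀ u v w : Fin n → ℝ, dotp u (v + w) = dotp u v + dotp u w := by
    intro u v w
    simp [dotp, mul_add, Finset.sum_add_distrib]
  have hlam : 0 < T / s := div_pos hT hs
  refine ⟨hnn, hne, T / s, hlam, ?_, ?_, ?_, ?_⟩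
  · intro i
    have : x i ∈ contactSet s h := hΛ ▸ mem_range_self i
    exact this.2
  · intro j k
    rw [hmove, div_eq_iff hlam.ne']
    split_ifs with hjk
    · subst hjk
      have := hst (Matrix.single j j 1) (-(1 / s)) 0
        (by rw [Matrix.IsSymm, Matrix.transpose_single])
        (by rw [Matrix.trace_single_eq_same]; field_simp; ring)
      simp only [add_zero, hbil, one_mul, mul_add, Finset.sum_add_distrib, ← mul_assoc,
        ← Finset.sum_mul] at this
      simp only [← mul_assoc]
      rw [← hTdef] at this
      linear_combination this
    · have := hst (Matrix.single j k 1 + Matrix.single k j 1) 0 0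
        (by rw [Matrix.IsSymm, Matrix.transpose_add, Matrix.transpose_single,
              Matrix.transpose_single, add_comm])
        (by rw [Matrix.trace_add, Matrix.trace_single_eq_of_ne _ _ _ hjk,
              Matrix.trace_single_eq_of_ne _ _ _ (Ne.symm hjk)]; simp)
      simp only [add_zero, Matrix.add_mulVec, hadd, hbil, one_mul, mul_zero] at this
      have h2 : ∑ i, c i * (x i j * x i k + x i k * x i j)
          = 2 * ∑ i, c i * (x i j * x i k) := by
        rw [Finset.mul_sum]
        exact Finset.sum_congr rfl fun i _ => by ring
      rw [h2] at this
      linarith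
  · rw [hmove, ← hTdef]
    field_simp
  · intro j
    rw [hmove, div_eq_zero_iff]
    left
    have := hst 0 0 (Pi.single j 1) Matrix.isSymm_zero (by simp)
    simpa [dotp, Pi.single_apply] using this
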